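/- Let 𝔽 be one of ℂ, ℝ, ℚ and fix an integer r ≥ 1. There is a constant K depending only on r such that the following holds. Let 0 < α ≤ 1 and 0 < δ < 1/r, and let A ∈ 𝔽^{n×n} be a symmetric matrix with ‖A‖∞ ≤ 1. Suppose there do not exist δn pairwise disjoint r-tuples (i₁,…,i_r) ∈ [n]^r such that the rows of A indexed by i₁,…,i_r are α-independent. Then there exists a symmetric matrix H ∈ 𝔽^{n×n} of rank less than r such that ‖A − H‖₁ ≤ K·(δ + α^{(6r)^{−r}})·n². -/

import Mathlib

/-- Vectors `v₁,…,v_q ∈ 𝔽ⁿ` are `ε`-independent if there do not exist linearly dependent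
vectors `v₁',…,v_q'` with `‖v₁−v₁'‖₁ + … + ‖v_q−v_q'‖₁ ≤ εn`. -/
def EpsIndependent (𝔽 : Type*) [NormedField 𝔽] {q n : ℕ} (ε : ℝ)
    (v : Fin q → Fin n → 𝔽) : Prop :=
  ¬ ∃ v' : Fin q → Fin n → 𝔽, ¬ LinearIndependent 𝔽 v' ∧
      ∑ i, ∑ j, ‖v i j - v' i j‖ ≤ ε * n

def Statement13 (𝔽 : Type) [NormedField 𝔽] : Prop :=
  ∀ r : ℕ, 1 ≤ r → ∃ K : ℝ,
    ∀ α δ : ℝ, 0 < α → α ≤ 1 → 0 < δ → δ < 1 / (r : ℝ) →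
    ∀ (n : ℕ) (A : Matrix (Fin n) (Fin n) 𝔽), A.IsSymm → (∀ i j, ‖A i j‖ ≤ 1) →
      -- there do not exist `δn` pairwise disjoint `r`-tuples of `α`-independent rows of `A`
      ¬ (∃ T : Finset (Fin r → Fin n), δ * n ≤ (T.card : ℝ) ∧
          (∀ t₁ ∈ T, ∀ t₂ ∈ T, t₁ ≠ t₂ → ∀ p q, t₁ p ≠ t₂ q) ∧
          ∀ t ∈ T, EpsIndependent 𝔽 α (fun a => A (t a))) →
      ∃ H : Matrix (Fin n) (Fin n) 𝔽, H.IsSymm ∧ H.rank < r ∧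
        ∑ i, ∑ j, ‖A i j - H i j‖ ≤ K * (δ + α ^ (((6 * (r : ℝ)) ^ r)⁻¹)) * (n : ℝ) ^ 2

/-!
A maximal disjoint family of `α`-independent `r`-tuples meets at most `r * δ * n` indices; erasing
these rows and columns costs `O(δ)` on average and leaves no `α`-independent `r`-tuple of rows.

Now take `q < r` maximal such that some `q` rows `R` of `A` are `s`-independent, where `s` is a
power of `α` depending on `q`. Then every row of `A` is close to a combination of the rows of `R`,
that is, `A = B * R + D` with `D` small on average compared with `s`. Independence of `R` bounds
the mean of `|det R_J|` over all `q`-tuples `J` of columns from below by `s ^ q`, hence some `J`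
has `det R_J` large and `D` small on the columns `J`, the rows `J` and the block `J × J`. For the
block one first moves the diagonal of `D` out of `A`.

The low-rank approximation comes from interpolation: with `Y = R_J⁻¹ R`, whose entries are bounded
by Cramer's rule, put `H = Yᵀ A_JJ Y`. This is symmetric of rank at most `q`, and since `D - D_J Y`
equals `A - A_J Y`, symmetry of `A` bounds `A - H` by `D` and these three restrictions of it.
-/

open Finset Matrix
open scoped BigOperators Nat

section MeanNorm

variable {l m n F : Type*} [Fintype l] [Fintype m] [Fintype n]

/-- The normalized entrywise `ℓ¹` norm of a matrix: `‖M‖₁` divided by the number of entries. -/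
noncomputable def meanNorm [Norm F] (M : Matrix m n F) : ℝ := 𝔼 i, 𝔼 j, ‖M i j‖

theorem sum_sum_norm_eq_card_mul_meanNorm [Norm F] (M : Matrix m n F) :
    ∑ i, ∑ j, ‖M i j‖ = Fintype.card m * Fintype.card n * meanNorm M := by
  rw [meanNorm, mul_right_comm, Fintype.card_mul_expect, sum_mul]
  exact sum_congr rfl fun i _ ↦ by rw [mul_comm, Fintype.card_mul_expect]

variable [SeminormedAddCommGroup F]

theorem meanNorm_nonneg (M : Matrix m n F) : 0 ≤ meanNorm M :=
  expect_nonneg fun _ _ ↦ expect_nonneg fun _ _ ↦ norm_nonneg _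

theorem meanNorm_mono {M N : Matrix m n F} (h : ∀ i j, ‖M i j‖ ≤ ‖N i j‖) :
    meanNorm M ≤ meanNorm N :=
  expect_le_expect fun i _ ↦ expect_le_expect fun j _ ↦ h i j

theorem meanNorm_add_le (M N : Matrix m n F) : meanNorm (M + N) ≤ meanNorm M + meanNorm N := by
  simp only [meanNorm, ← expect_add_distrib]
  exact expect_le_expect fun i _ ↦ expect_le_expect fun j _ ↦ norm_add_le _ _

theorem meanNorm_sub_le (M N : Matrix m n F) : meanNorm (M - N) ≤ meanNorm M + meanNorm N := by
  simp only [meanNorm, ← expect_add_distrib]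
  exact expect_le_expect fun i _ ↦ expect_le_expect fun j _ ↦ norm_sub_le _ _

theorem meanNorm_transpose (M : Matrix m n F) : meanNorm Mᵀ = meanNorm M :=
  expect_comm _ _ _

theorem meanNorm_diagonal_diag_le [DecidableEq m] (M : Matrix m m F) :
    meanNorm (diagonal M.diag) ≤ meanNorm M := by
  refine meanNorm_mono fun i j ↦ ?_
  rcases eq_or_ne i j with rfl | hij <;> simp [*]

theorem meanNorm_sub_diagonal_diag_le [DecidableEq m] (M : Matrix m m F) :
    meanNorm (M - diagonal M.diag) ≤ meanNorm M := by
  refine meanNorm_mono fun i j ↦ ?_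
  rcases eq_or_ne i j with rfl | hij <;> simp [*]

theorem meanNorm_le_of_expect_norm_le [Nonempty m] {M : Matrix m n F} {c : ℝ}
    (h : ∀ i, 𝔼 j, ‖M i j‖ ≤ c) : meanNorm M ≤ c :=
  expect_le univ_nonempty fun i _ ↦ h i

theorem meanNorm_mul_le {R : Type*} [SeminormedRing R] [Nonempty n] (M : Matrix m l R)
    {Y : Matrix l n R} {y : ℝ} (hY : ∀ a j, ‖Y a j‖ ≤ y) :
    meanNorm (M * Y) ≤ meanNorm M * (Fintype.card l * y) := by
  have entry_le (i : m) (j : n) : ‖(M * Y) i j‖ ≤ (𝔼 a, ‖M i a‖) * (Fintype.card l * y) := by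
    calc ‖∑ a, M i a * Y a j‖ ≤ ∑ a, ‖M i a * Y a j‖ := norm_sum_le _ _
      _ ≤ ∑ a, ‖M i a‖ * y := by gcongr with a; exact norm_mul_le_of_le le_rfl (hY a j)
      _ = (𝔼 a, ‖M i a‖) * (Fintype.card l * y) := by
        rw [← sum_mul, ← Fintype.card_mul_expect]; ring
  rw [meanNorm, meanNorm, expect_mul]
  exact expect_le_expect fun i _ ↦ expect_le univ_nonempty fun j _ ↦ entry_le i j

end MeanNorm

section Averaging

variable {ι κ : Type*} [Fintype ι] [Nonempty ι] [Fintype κ] [DecidableEq κ]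

theorem expect_comp_eval (a : κ) (g : ι → ℝ) : 𝔼 J : κ → ι, g (J a) = 𝔼 i, g i := by
  calc 𝔼 J : κ → ι, g (J a) = 𝔼 p : ι × ({b // b ≠ a} → ι), g p.1 :=
        Fintype.expect_equiv (Equiv.funSplitAt a ι) _ _ fun _ ↦ rfl
    _ = 𝔼 i, g i := by
        rw [← univ_product_univ, expect_product]
        simp only [Fintype.expect_const]

theorem expect_comp_eval_pair {a b : κ} (hab : a ≠ b) (g : ι → ι → ℝ) :
    𝔼 J : κ → ι, g (J a) (J b) = 𝔼 i, 𝔼 j, g i j := by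
  calc 𝔼 J : κ → ι, g (J a) (J b)
      = 𝔼 p : ι × ({b // b ≠ a} → ι), g p.1 (p.2 ⟨b, hab.symm⟩) :=
        Fintype.expect_equiv (Equiv.funSplitAt a ι) _ _ fun _ ↦ rfl
    _ = 𝔼 i, 𝔼 j, g i j := by
        rw [← univ_product_univ, expect_product]
        exact expect_congr rfl fun i _ ↦ expect_comp_eval _ (g i)

variable {F : Type*} [SeminormedAddCommGroup F]

theorem expect_meanNorm_submatrix_left_le {m : Type*} [Fintype m] (D : Matrix ι m F) :
    𝔼 J : κ → ι, meanNorm (D.submatrix J id) ≤ meanNorm D := by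
  simp only [meanNorm, submatrix_apply, id]
  rw [expect_comm]
  simp only [expect_comp_eval _ fun i ↦ 𝔼 j, ‖D i j‖]
  rcases isEmpty_or_nonempty κ with _ | _
  · simpa [meanNorm] using meanNorm_nonneg D
  · simp

theorem expect_meanNorm_submatrix_right_le {m : Type*} [Fintype m] (D : Matrix m ι F) :
    𝔼 J : κ → ι, meanNorm (D.submatrix id J) ≤ meanNorm D := by
  simpa only [← transpose_submatrix, meanNorm_transpose] using
    expect_meanNorm_submatrix_left_le (κ := κ) Dᵀ

/-- Without the hypothesis on the diagonal the terms `a = b` would contribute the mean diagonal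
entry, which `meanNorm D` does not control. -/
theorem expect_meanNorm_submatrix_le {D : Matrix ι ι F} (hD : ∀ i, D i i = 0) :
    𝔼 J : κ → ι, meanNorm (D.submatrix J J) ≤ meanNorm D := by
  have entry_le (a b : κ) : 𝔼 J : κ → ι, ‖D (J a) (J b)‖ ≤ meanNorm D := by
    rcases eq_or_ne a b with rfl | hab
    · simpa only [hD, norm_zero, expect_const_zero] using meanNorm_nonneg D
    · exact (expect_comp_eval_pair hab fun i j ↦ ‖D i j‖).le
  simp only [meanNorm, submatrix_apply]
  rw [expect_comm]
  simp only [expect_comm (s := univ (α := κ → ι))]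
  rcases isEmpty_or_nonempty κ with _ | _
  · simpa [meanNorm] using meanNorm_nonneg D
  · exact expect_le univ_nonempty fun a _ ↦ expect_le univ_nonempty fun b _ ↦ entry_le a b

theorem exists_half_le_and_mul_le {Ω : Type*} [Fintype Ω] [Nonempty Ω] {f W : Ω → ℝ} {p κ : ℝ}
    (hκ : 0 < κ) (hp : 0 ≤ p) (hW : ∀ J, 0 ≤ W J) (hf : p ≤ 𝔼 J, f J) (hWκ : 𝔼 J, W J ≤ κ) :
    ∃ J, p / 2 ≤ f J ∧ p * W J ≤ 2 * κ * f J := by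
  have average : κ * p ≤ 𝔼 J, (2 * κ * f J - p * W J) := by
    rw [expect_sub_distrib, ← mul_expect, ← mul_expect]
    nlinarith
  obtain ⟨J, -, hJ⟩ := exists_le_of_le_expect univ_nonempty average
  have := mul_nonneg hp (hW J)
  have := mul_nonneg hκ.le hp
  exact ⟨J, le_of_mul_le_mul_left (by linarith) hκ, by linarith⟩

end Averaging

section Determinant

variable {ι κ F : Type*} [Fintype ι] [NormedField F] {q : ℕ}

/-- Expanding along the first column: for fixed later columns the determinant is a combination of
the entries of the first one, and the coefficient of the first row is a smaller determinant. -/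
theorem pow_le_expect_norm_det_submatrix {s : ℝ} (hs : 0 ≤ s) {R : Matrix (Fin q) ι F}
    (hR : ∀ c a, s * ‖c a‖ ≤ 𝔼 k, ‖(c ᵥ* R) k‖) :
    s ^ q ≤ 𝔼 J : Fin q → ι, ‖(R.submatrix id J).det‖ := by
  induction q with
  | zero => simp
  | succ q ih =>
    have tail_bound (c : Fin q → F) (a : Fin q) :
        s * ‖c a‖ ≤ 𝔼 k, ‖(c ᵥ* R.submatrix Fin.succ id) k‖ := by
      simpa [vecMul, dotProduct, Fin.sum_univ_succ] using hR (Fin.cons 0 c) a.succ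
    have first_column (J : Fin q → ι) :
        s * ‖((R.submatrix Fin.succ id).submatrix id J).det‖ ≤
          𝔼 k, ‖(R.submatrix id (Fin.cons k J : Fin (q + 1) → ι)).det‖ := by
      convert hR (fun a ↦ (-1) ^ (a : ℕ) * (R.submatrix a.succAbove J).det) 0 using 4 with k
      · simp
      · rw [det_succ_column_zero, vecMul, dotProduct]
        exact sum_congr rfl fun a _ ↦ by simp [submatrix, mul_right_comm]
    calc s ^ (q + 1) ≤ s * 𝔼 J : Fin q → ι, ‖((R.submatrix Fin.succ id).submatrix id J).det‖ := by
          rw [pow_succ']; gcongr; exact ih tail_bound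
      _ ≤ 𝔼 J : Fin q → ι, 𝔼 k, ‖(R.submatrix id (Fin.cons k J : Fin (q + 1) → ι)).det‖ := by
          rw [mul_expect]; exact expect_le_expect fun J _ ↦ first_column J
      _ = 𝔼 J : Fin (q + 1) → ι, ‖(R.submatrix id J).det‖ := by
          rw [expect_comm, ← expect_product', univ_product_univ]
          exact Fintype.expect_equiv (Fin.consEquiv fun _ ↦ ι) _ _ fun p ↦ rfl

theorem norm_det_le_factorial {m : Type*} [Fintype m] [DecidableEq m] {M : Matrix m m F}
    (hM : ∀ a b, ‖M a b‖ ≤ 1) : ‖M.det‖ ≤ (Fintype.card m)! :=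
  (det_le (abv := NormedField.toAbsoluteValue F) hM).trans_eq (by simp)

/-- If the determinant vanishes, both sides are `0` since then `M⁻¹ = 0` and `x / 0 = 0`. -/
theorem norm_inv_submatrix_mul_le {m : Type*} [Fintype m] [DecidableEq m] {R : Matrix m κ F}
    (hR : ∀ a k, ‖R a k‖ ≤ 1) (J : m → κ) (a : m) (k : κ) :
    ‖((R.submatrix id J)⁻¹ * R) a k‖ ≤ (Fintype.card m)! / ‖(R.submatrix id J).det‖ := by
  have cramer_eq : ((R.submatrix id J)⁻¹ * R) a k =
      ((R.submatrix id J).updateCol a (R.col k)).det / (R.submatrix id J).det := by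
    rw [← cramer_apply, cramer_eq_adjugate_mulVec, Matrix.inv_def, Matrix.smul_mul,
      Matrix.smul_apply, smul_eq_mul, Ring.inverse_eq_inv', inv_mul_eq_div]
    rfl
  rw [cramer_eq, norm_div]
  gcongr
  refine norm_det_le_factorial fun b c ↦ ?_
  rw [updateCol_apply]
  split_ifs
  exacts [hR b k, hR b (J c)]

end Determinant

section Interpolation

variable {ι m F : Type*} [Fintype m]

theorem sub_mul_eq_of_submatrix_mul_eq [CommRing F] {A : Matrix ι ι F} {B : Matrix ι m F}
    {R : Matrix m ι F} {J : m → ι} {Y : Matrix m ι F} (hY : R.submatrix id J * Y = R) :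
    A - A.submatrix id J * Y = (A - B * R) - (A - B * R).submatrix id J * Y := by
  have submatrix_eq : (A - B * R).submatrix id J = A.submatrix id J - B * R.submatrix id J := rfl
  rw [submatrix_eq, Matrix.sub_mul, Matrix.mul_assoc, hY]
  abel

theorem sub_transpose_mul_submatrix_mul_eq [CommRing F] {A : Matrix ι ι F} (hA : A.IsSymm)
    (J : m → ι) (Y : Matrix m ι F) :
    A - Yᵀ * A.submatrix J J * Y =
      (A - A.submatrix id J * Y) + ((A - A.submatrix id J * Y).submatrix J id)ᵀ * Y := by
  have submatrix_transpose :
      ((A - A.submatrix id J * Y).submatrix J id)ᵀ = A.submatrix id J - Yᵀ * A.submatrix J J := by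
    rw [transpose_submatrix, transpose_sub, transpose_mul, transpose_submatrix, hA.eq]
    rfl
  rw [submatrix_transpose, Matrix.sub_mul]
  abel

variable [Fintype ι] [Nonempty ι]

theorem meanNorm_sub_transpose_mul_submatrix_mul_le [NormedCommRing F] {A : Matrix ι ι F}
    (hA : A.IsSymm) {B : Matrix ι m F} {R : Matrix m ι F} {J : m → ι} {Y : Matrix m ι F} {y : ℝ}
    (hy : 0 ≤ y) (hRY : R.submatrix id J * Y = R) (hY : ∀ a k, ‖Y a k‖ ≤ y) {D : Matrix ι ι F}
    (hD : A - B * R = D) :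
    meanNorm (A - Yᵀ * A.submatrix J J * Y) ≤ meanNorm D + (1 + Fintype.card m * y) ^ 2 *
      (meanNorm (D.submatrix id J) + meanNorm (D.submatrix J id) +
        meanNorm (D.submatrix J J)) := by
  set E := A - A.submatrix id J * Y
  have E_eq : E = D - D.submatrix id J * Y := hD ▸ sub_mul_eq_of_submatrix_mul_eq hRY
  have E_rows_eq : E.submatrix J id = D.submatrix J id - D.submatrix J J * Y := by
    rw [E_eq]; rfl
  set z := Fintype.card m * y
  have hz : 0 ≤ z := by positivity
  have h₁ := meanNorm_nonneg (D.submatrix id J)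
  have h₂ := meanNorm_nonneg (D.submatrix J id)
  have h₃ := meanNorm_nonneg (D.submatrix J J)
  calc meanNorm (A - Yᵀ * A.submatrix J J * Y)
      ≤ meanNorm E + meanNorm (E.submatrix J id) * z := by
        rw [sub_transpose_mul_submatrix_mul_eq hA, ← meanNorm_transpose (E.submatrix J id)]
        exact (meanNorm_add_le _ _).trans (by gcongr; exact meanNorm_mul_le _ hY)
    _ ≤ (meanNorm D + meanNorm (D.submatrix id J) * z) +
          (meanNorm (D.submatrix J id) + meanNorm (D.submatrix J J) * z) * z := by
        rw [E_rows_eq, E_eq]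
        gcongr <;> exact (meanNorm_sub_le _ _).trans (by gcongr; exact meanNorm_mul_le _ hY)
    _ ≤ _ := by nlinarith [mul_nonneg hz h₁, mul_nonneg hz h₂, mul_nonneg hz h₃,
        mul_nonneg (sq_nonneg z) h₁, mul_nonneg (sq_nonneg z) h₂]

variable [NormedField F] {q : ℕ} {A : Matrix ι ι F} {B : Matrix ι (Fin q) F}
  {R : Matrix (Fin q) ι F} {s σ : ℝ}

theorem exists_half_pow_le_det_and_meanNorm_submatrix_le (hs : 0 < s)
    (hR : ∀ c a, s * ‖c a‖ ≤ 𝔼 k, ‖(c ᵥ* R) k‖) {D : Matrix ι ι F} (hD : ∀ i, D i i = 0)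
    (hσ : 0 < σ) (hDσ : meanNorm D ≤ σ) :
    ∃ J : Fin q → ι, s ^ q / 2 ≤ ‖(R.submatrix id J).det‖ ∧
      s ^ q * (meanNorm (D.submatrix id J) + meanNorm (D.submatrix J id) +
        meanNorm (D.submatrix J J)) ≤ 6 * σ * ‖(R.submatrix id J).det‖ := by
  have average_le : 𝔼 J : Fin q → ι, (meanNorm (D.submatrix id J) + meanNorm (D.submatrix J id) +
      meanNorm (D.submatrix J J)) ≤ 3 * σ := by
    rw [expect_add_distrib, expect_add_distrib]
    linarith [expect_meanNorm_submatrix_right_le (κ := Fin q) D,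
      expect_meanNorm_submatrix_left_le (κ := Fin q) D,
      expect_meanNorm_submatrix_le (κ := Fin q) hD]
  obtain ⟨J, hdet, hJ⟩ := exists_half_le_and_mul_le (by positivity : 0 < 3 * σ)
    (by positivity : 0 ≤ s ^ q)
    (fun J ↦ add_nonneg (add_nonneg (meanNorm_nonneg _) (meanNorm_nonneg _)) (meanNorm_nonneg _))
    (pow_le_expect_norm_det_submatrix hs.le hR) average_le
  exact ⟨J, hdet, hJ.trans_eq (by ring)⟩

theorem one_add_mul_factorial_div_sq_mul_le {d p w σ : ℝ} (hp : 0 < p) (hpd : p / 2 ≤ d)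
    (hd : d ≤ q !) (hw : p * w ≤ 6 * σ * d) (hσ : 0 ≤ σ) :
    (1 + q * (q ! / d)) ^ 2 * w ≤ 12 * ((q + 1)! : ℝ) ^ 2 / p ^ 2 * σ := by
  have hd0 : 0 < d := by linarith
  calc (1 + q * (q ! / d)) ^ 2 * w = (d + q * q !) ^ 2 / d ^ 2 * w := by field_simp
    _ ≤ (d + q * q !) ^ 2 / d ^ 2 * (6 * σ * d / p) := by
        gcongr
        rwa [le_div_iff₀' hp]
    _ ≤ ((q + 1)! : ℝ) ^ 2 / d ^ 2 * (6 * σ * d / p) := by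
        gcongr
        rw [Nat.factorial_succ]
        push_cast
        linarith
    _ = 6 * ((q + 1)! : ℝ) ^ 2 * σ / p / d := by field_simp
    _ ≤ 6 * ((q + 1)! : ℝ) ^ 2 * σ / p / (p / 2) := by gcongr
    _ = 12 * ((q + 1)! : ℝ) ^ 2 / p ^ 2 * σ := by field_simp; ring

theorem exists_isSymm_rank_le_of_diag_eq_zero (hA : A.IsSymm) (hR₁ : ∀ a k, ‖R a k‖ ≤ 1)
    (hs : 0 < s) (hR : ∀ c a, s * ‖c a‖ ≤ 𝔼 k, ‖(c ᵥ* R) k‖) (hσ : 0 < σ)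
    (hdiag : ∀ i, (A - B * R) i i = 0) (hAB : meanNorm (A - B * R) ≤ σ) :
    ∃ H : Matrix ι ι F, H.IsSymm ∧ H.rank ≤ q ∧
      meanNorm (A - H) ≤ (1 + 12 * ((q + 1)! : ℝ) ^ 2 / (s ^ q) ^ 2) * σ := by
  obtain ⟨J, hdet, hJ⟩ := exists_half_pow_le_det_and_meanNorm_submatrix_le hs hR hdiag hσ hAB
  set d := ‖(R.submatrix id J).det‖
  have hd0 : 0 < d := (by positivity : 0 < s ^ q / 2).trans_le hdet
  have hd_le : d ≤ q ! := by
    simpa using norm_det_le_factorial (M := R.submatrix id J) fun a b ↦ hR₁ a (J b)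
  have det_isUnit : IsUnit (R.submatrix id J).det := isUnit_iff_ne_zero.2 (norm_pos_iff.1 hd0)
  set Y := (R.submatrix id J)⁻¹ * R
  have hRY : R.submatrix id J * Y = R :=
    mul_nonsing_inv_cancel_left _ _ det_isUnit
  have hY (a : Fin q) (k : ι) : ‖Y a k‖ ≤ q ! / d := by
    simpa using norm_inv_submatrix_mul_le hR₁ J a k
  refine ⟨Yᵀ * A.submatrix J J * Y, ?_, ?_, ?_⟩
  · simp [IsSymm, transpose_mul, hA.eq, Matrix.mul_assoc]
  · exact (rank_mul_le_right _ Y).trans (Y.rank_le_card_height.trans_eq (Fintype.card_fin q))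
  · have := meanNorm_sub_transpose_mul_submatrix_mul_le (B := B) hA (by positivity) hRY hY rfl
    rw [Fintype.card_fin] at this
    linarith [one_add_mul_factorial_div_sq_mul_le (by positivity) hdet hd_le hJ hσ.le]

theorem exists_isSymm_rank_le (hA : A.IsSymm) (hR₁ : ∀ a k, ‖R a k‖ ≤ 1) (hs : 0 < s)
    (hR : ∀ c a, s * ‖c a‖ ≤ 𝔼 k, ‖(c ᵥ* R) k‖) (hσ : 0 < σ) (hAB : meanNorm (A - B * R) ≤ σ) :
    ∃ H : Matrix ι ι F, H.IsSymm ∧ H.rank ≤ q ∧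
      meanNorm (A - H) ≤ (2 + 12 * ((q + 1)! : ℝ) ^ 2 / (s ^ q) ^ 2) * σ := by
  classical
  set Δ : Matrix ι ι F := diagonal (A - B * R).diag with hΔ
  have offDiag_eq : A - Δ - B * R = A - B * R - Δ := by abel
  obtain ⟨H, hH, hrank, hAH⟩ := exists_isSymm_rank_le_of_diag_eq_zero (A := A - Δ) (B := B)
    (hA.sub (isSymm_diagonal _)) hR₁ hs hR hσ (fun i ↦ by simp [hΔ])
    (offDiag_eq ▸ (meanNorm_sub_diagonal_diag_le _).trans hAB)
  refine ⟨H, hH, hrank, ?_⟩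
  calc meanNorm (A - H) = meanNorm ((A - Δ - H) + Δ) := by congr 1; abel
    _ ≤ meanNorm (A - Δ - H) + meanNorm Δ := meanNorm_add_le _ _
    _ ≤ _ := by linarith [(meanNorm_diagonal_diag_le (A - B * R)).trans hAB]

end Interpolation

section EpsIndependent

variable {F : Type*} [NormedField F] {q n : ℕ} {ε : ℝ}

theorem EpsIndependent.of_isEmpty {v : Fin 0 → Fin n → F} : EpsIndependent F ε v :=
  fun ⟨_, hv', _⟩ ↦ hv' linearIndependent_empty_type

theorem EpsIndependent.linearIndependent {v : Fin q → Fin n → F} (hε : 0 ≤ ε)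
    (hv : EpsIndependent F ε v) : LinearIndependent F v := by
  by_contra hdep
  exact hv ⟨v, hdep, by simpa using by positivity⟩

theorem EpsIndependent.of_mul {v : Fin q → Fin n → F} {χ : Fin n → F} (hχ : ∀ k, ‖χ k‖ ≤ 1)
    (hv : EpsIndependent F ε fun a ↦ χ * v a) : EpsIndependent F ε v := by
  rintro ⟨v', hv', hle⟩
  refine hv ⟨fun a ↦ χ * v' a, fun hli ↦ hv' (hli.of_comp (LinearMap.mulLeft F χ)), ?_⟩
  refine (sum_le_sum fun a _ ↦ sum_le_sum fun k _ ↦ ?_).trans hle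
  simp only [Pi.mul_apply, ← mul_sub, norm_mul]
  exact mul_le_of_le_one_left (norm_nonneg _) (hχ k)

variable {R : Matrix (Fin q) (Fin n) F}

/-- Subtracting a suitable multiple of `c ᵥ* R` from row `a` alone makes the rows dependent. -/
theorem EpsIndependent.mul_norm_le (hR : EpsIndependent F ε R) (c : Fin q → F) (a : Fin q) :
    ε * ‖c a‖ ≤ 𝔼 k, ‖(c ᵥ* R) k‖ := by
  rcases eq_or_ne (c a) 0 with hca | hca
  · rw [hca, norm_zero, mul_zero]
    exact expect_nonneg fun _ _ ↦ norm_nonneg _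
  by_contra! hlt
  refine hR ⟨R - vecMulVec (Pi.single a (c a)⁻¹) (c ᵥ* R), ?_, ?_⟩
  · refine Fintype.not_linearIndependent_iff.2 ⟨c, ?_, a, hca⟩
    rw [← vecMul_eq_sum, vecMul_sub, vecMul_vecMulVec, dotProduct_single, mul_inv_cancel₀ hca,
      one_smul, sub_self]
  · calc ∑ b, ∑ k, ‖R b k - (R - vecMulVec (Pi.single a (c a)⁻¹) (c ᵥ* R)) b k‖
        = (∑ k, ‖(c ᵥ* R) k‖) / ‖c a‖ := by
          simp_rw [Matrix.sub_apply, sub_sub_cancel, vecMulVec_apply, norm_mul, ← mul_sum]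
          rw [← sum_mul, sum_eq_single a (by simp +contextual) (by simp)]
          simp [div_eq_inv_mul]
      _ ≤ ε * n := by
          rw [div_le_iff₀ (norm_pos_iff.2 hca), ← Fintype.card_mul_expect, Fintype.card_fin]
          nlinarith [Nat.cast_nonneg (α := ℝ) n]

theorem exists_expect_norm_vecMul_le_of_not_epsIndependent (hε : 0 ≤ ε)
    (hR : ¬EpsIndependent F ε R) :
    ∃ (c : Fin q → F) (a : Fin q), c a = 1 ∧ (∀ b, ‖c b‖ ≤ 1) ∧ 𝔼 k, ‖(c ᵥ* R) k‖ ≤ ε := by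
  obtain ⟨(R' : Matrix (Fin q) (Fin n) F), hdep, hle⟩ := not_not.1 hR
  obtain ⟨g, hg, i, hi⟩ := Fintype.not_linearIndependent_iff.1 hdep
  have : Nonempty (Fin q) := ⟨i⟩
  obtain ⟨a, ha⟩ := Finite.exists_max fun b ↦ ‖g b‖
  have hga : 0 < ‖g a‖ := (norm_pos_iff.2 hi).trans_le (ha i)
  set c : Fin q → F := (g a)⁻¹ • g with hc
  have c_le_one (b : Fin q) : ‖c b‖ ≤ 1 := by
    simpa [hc, ← div_eq_inv_mul] using (div_le_one hga).2 (ha b)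
  have c_vecMul_R' : c ᵥ* R' = 0 := by rw [hc, smul_vecMul, vecMul_eq_sum, hg, smul_zero]
  refine ⟨c, a, inv_mul_cancel₀ (norm_pos_iff.1 hga), c_le_one, ?_⟩
  rw [Fintype.expect_eq_sum_div_card, Fintype.card_fin]
  refine div_le_of_le_mul₀ n.cast_nonneg hε (le_trans ?_ hle)
  rw [sum_comm]
  refine sum_le_sum fun k _ ↦ ?_
  calc ‖(c ᵥ* R) k‖ = ‖∑ b, c b * (R b k - R' b k)‖ := by
        rw [← sub_zero (c ᵥ* R), ← c_vecMul_R', ← vecMul_sub]; rfl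
    _ ≤ ∑ b, ‖R b k - R' b k‖ := norm_sum_le_of_le _ fun b _ ↦ by
        rw [norm_mul]
        exact mul_le_of_le_one_left (norm_nonneg _) (c_le_one b)

variable {s s' : ℝ} {x : Fin n → F}

theorem half_le_norm_zero_of_expect_norm_vecMul_le [NeZero n] (hs : s ≤ 1) (hs' : s' ≤ s / 2)
    (hR : ∀ c a, s * ‖c a‖ ≤ 𝔼 k, ‖(c ᵥ* R) k‖) (hx : ∀ k, ‖x k‖ ≤ 1) {c : Fin (q + 1) → F}
    {a : Fin (q + 1)} (hca : c a = 1) (hc : 𝔼 k, ‖c 0 * x k + (Fin.tail c ᵥ* R) k‖ ≤ s') :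
    s / 2 ≤ ‖c 0‖ := by
  cases a using Fin.cases with
  | zero => rw [hca, norm_one]; linarith
  | succ a =>
    have tail_le : 𝔼 k, ‖(Fin.tail c ᵥ* R) k‖ ≤ s' + ‖c 0‖ := by
      calc 𝔼 k, ‖(Fin.tail c ᵥ* R) k‖
          ≤ 𝔼 k, (‖c 0 * x k + (Fin.tail c ᵥ* R) k‖ + ‖c 0‖) := by
            refine expect_le_expect fun k _ ↦ ?_
            calc ‖(Fin.tail c ᵥ* R) k‖ = ‖(c 0 * x k + (Fin.tail c ᵥ* R) k) - c 0 * x k‖ := by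
                  rw [add_sub_cancel_left]
              _ ≤ _ := norm_sub_le_of_le le_rfl
                  ((norm_mul_le_of_le le_rfl (hx k)).trans_eq (mul_one _))
        _ ≤ s' + ‖c 0‖ := by rw [expect_add_distrib, Fintype.expect_const]; gcongr
    have le_tail : s ≤ 𝔼 k, ‖(Fin.tail c ᵥ* R) k‖ := by
      simpa [Fin.tail, hca] using hR (Fin.tail c) a
    linarith

theorem exists_expect_norm_sub_vecMul_le [NeZero n] (hs : 0 < s) (hs₁ : s ≤ 1) (hs' : 0 ≤ s')
    (hss' : s' ≤ s / 2) (hR : ∀ c a, s * ‖c a‖ ≤ 𝔼 k, ‖(c ᵥ* R) k‖) (hx : ∀ k, ‖x k‖ ≤ 1)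
    (hdep : ¬EpsIndependent F s' (Fin.cons x R : Fin (q + 1) → Fin n → F)) :
    ∃ b : Fin q → F, 𝔼 k, ‖x k - (b ᵥ* R) k‖ ≤ 2 * s' / s := by
  obtain ⟨c, a, hca, -, hc⟩ := exists_expect_norm_vecMul_le_of_not_epsIndependent hs' hdep
  have vecMul_eq (k : Fin n) :
      (c ᵥ* of (Fin.cons x R)) k = c 0 * x k + (Fin.tail c ᵥ* R) k :=
    Fin.sum_univ_succ fun a ↦ c a * (Fin.cons x R : Fin (q + 1) → Fin n → F) a k
  replace hc : 𝔼 k, ‖c 0 * x k + (Fin.tail c ᵥ* R) k‖ ≤ s' := by simpa only [← vecMul_eq]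
  have hc₀ := half_le_norm_zero_of_expect_norm_vecMul_le hs₁ hss' hR hx hca hc
  have hc₀_pos : 0 < ‖c 0‖ := by linarith
  refine ⟨-(c 0)⁻¹ • Fin.tail c, ?_⟩
  calc 𝔼 k, ‖x k - ((-(c 0)⁻¹ • Fin.tail c) ᵥ* R) k‖
      = (𝔼 k, ‖c 0 * x k + (Fin.tail c ᵥ* R) k‖) / ‖c 0‖ := by
        rw [expect_div]
        refine expect_congr rfl fun k _ ↦ ?_
        rw [← norm_div, add_div, mul_div_cancel_left₀ _ (norm_pos_iff.1 hc₀_pos), smul_vecMul,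
          Pi.smul_apply, smul_eq_mul, neg_mul, sub_neg_eq_add, div_eq_inv_mul]
    _ ≤ s' / (s / 2) := by gcongr
    _ = 2 * s' / s := by field_simp

end EpsIndependent

section Symmetric

variable {F : Type*} [NormedField F] {n : ℕ} {A : Matrix (Fin n) (Fin n) F} {β : ℝ}

theorem exists_isSymm_rank_le_of_not_epsIndependent_succ [NeZero n] {q : ℕ} {s : ℝ}
    (hA : A.IsSymm) (hA₁ : ∀ i j, ‖A i j‖ ≤ 1) (hs : 0 < s) (hs₁ : s ≤ 1 / 2) {t : Fin q → Fin n}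
    (ht : EpsIndependent F s (A.submatrix t id))
    (hmax : ∀ u : Fin (q + 1) → Fin n, ¬EpsIndependent F (s ^ (2 * q + 2)) (A.submatrix u id)) :
    ∃ H : Matrix (Fin n) (Fin n) F, H.IsSymm ∧ H.rank ≤ q ∧
      meanNorm (A - H) ≤ 28 * ((q + 1)! : ℝ) ^ 2 * s := by
  have hR := ht.mul_norm_le
  have pow_le_half : s ^ (2 * q + 2) ≤ s / 2 := by
    calc s ^ (2 * q + 2) ≤ s ^ 2 := pow_le_pow_of_le_one hs.le (by linarith) (by lia)
      _ ≤ s / 2 := by nlinarith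
  have row_approx (i : Fin n) :
      ∃ b : Fin q → F, 𝔼 k, ‖A i k - (b ᵥ* A.submatrix t id) k‖ ≤ 2 * s ^ (2 * q + 1) := by
    have cons_eq : (Fin.cons (A i) (A.submatrix t id) : Fin (q + 1) → Fin n → F) =
        A.submatrix (Fin.cons i t : Fin (q + 1) → Fin n) id := by
      ext a k
      cases a using Fin.cases <;> rfl
    obtain ⟨b, hb⟩ := exists_expect_norm_sub_vecMul_le hs (by linarith) (by positivity)
      pow_le_half hR (hA₁ i) (cons_eq ▸ hmax _)
    exact ⟨b, hb.trans_eq (by rw [pow_succ]; field_simp)⟩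
  choose B hB using row_approx
  obtain ⟨H, hH, hrank, hAH⟩ := exists_isSymm_rank_le (B := of B) hA (fun a k ↦ hA₁ (t a) k) hs hR
    (by positivity) (meanNorm_le_of_expect_norm_le hB)
  refine ⟨H, hH, hrank, hAH.trans ?_⟩
  have one_le : (1 : ℝ) ≤ ((q + 1)! : ℝ) ^ 2 :=
    one_le_pow₀ (by exact_mod_cast (q + 1).factorial_pos)
  calc (2 + 12 * ((q + 1)! : ℝ) ^ 2 / (s ^ q) ^ 2) * (2 * s ^ (2 * q + 1))
      = 4 * s ^ (2 * q + 1) + 24 * ((q + 1)! : ℝ) ^ 2 * s := by field_simp; ring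
    _ ≤ 4 * s + 24 * ((q + 1)! : ℝ) ^ 2 * s := by
        gcongr
        exact pow_le_of_le_one hs.le (by linarith) (by lia)
    _ ≤ 28 * ((q + 1)! : ℝ) ^ 2 * s := by nlinarith

theorem exists_epsIndependent_and_forall_not_succ {r : ℕ}
    (hr : ∀ u : Fin r → Fin n, ¬EpsIndependent F (β ^ (2 ^ r * r !)) (A.submatrix u id)) :
    ∃ q < r, (∃ t : Fin q → Fin n, EpsIndependent F (β ^ (2 ^ q * q !)) (A.submatrix t id)) ∧
      ∀ u : Fin (q + 1) → Fin n,
        ¬EpsIndependent F ((β ^ (2 ^ q * q !)) ^ (2 * q + 2)) (A.submatrix u id) := by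
  by_contra! hstep
  have exists_epsIndependent (q : ℕ) (hq : q ≤ r) :
      ∃ t : Fin q → Fin n, EpsIndependent F (β ^ (2 ^ q * q !)) (A.submatrix t id) := by
    induction q with
    | zero => exact ⟨Fin.elim0, .of_isEmpty⟩
    | succ q ih =>
      obtain ⟨u, hu⟩ := hstep q hq (ih (by lia))
      refine ⟨u, ?_⟩
      rwa [← pow_mul, show 2 ^ q * q ! * (2 * q + 2) = 2 ^ (q + 1) * (q + 1)! by
        rw [Nat.factorial_succ]; ring] at hu
  obtain ⟨t, ht⟩ := exists_epsIndependent r le_rfl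
  exact hr t ht

theorem exists_isSymm_rank_lt_of_forall_not_epsIndependent {r : ℕ} (hr : 1 ≤ r) [NeZero n]
    (hA : A.IsSymm) (hA₁ : ∀ i j, ‖A i j‖ ≤ 1) (hβ : 0 < β)
    (hdep : ∀ u : Fin r → Fin n, ¬EpsIndependent F (β ^ (2 ^ r * r !)) (A.submatrix u id)) :
    ∃ H : Matrix (Fin n) (Fin n) F, H.IsSymm ∧ H.rank < r ∧
      meanNorm (A - H) ≤ 28 * (r ! : ℝ) ^ 2 * β := by
  rcases le_total (1 / 2) β with hβ₂ | hβ₂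
  · refine ⟨0, isSymm_zero, by rwa [Matrix.rank_zero], ?_⟩
    have one_le : (1 : ℝ) ≤ (r ! : ℝ) ^ 2 := one_le_pow₀ (by exact_mod_cast r.factorial_pos)
    have meanNorm_le_one : meanNorm A ≤ 1 :=
      meanNorm_le_of_expect_norm_le fun i ↦ expect_le univ_nonempty fun j _ ↦ hA₁ i j
    rw [sub_zero]
    nlinarith
  · obtain ⟨q, hq, ⟨t, ht⟩, hmax⟩ := exists_epsIndependent_and_forall_not_succ hdep
    have pow_le : β ^ (2 ^ q * q !) ≤ β := pow_le_of_le_one hβ.le (by linarith) (by positivity)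
    obtain ⟨H, hH, hrank, hAH⟩ := exists_isSymm_rank_le_of_not_epsIndependent_succ hA hA₁
      (by positivity) (pow_le.trans hβ₂) ht hmax
    refine ⟨H, hH, hrank.trans_lt hq, hAH.trans ?_⟩
    gcongr
    exact hq

end Symmetric

section Erasing

theorem exists_card_le_and_forall_exists_mem {ι κ : Type*} [Finite ι] [Fintype κ] [Nonempty κ]
    {p : (κ → ι) → Prop} {x : ℝ}
    (h : ¬∃ T : Finset (κ → ι), x ≤ (T.card : ℝ) ∧
      (∀ t₁ ∈ T, ∀ t₂ ∈ T, t₁ ≠ t₂ → ∀ a b, t₁ a ≠ t₂ b) ∧ ∀ t ∈ T, p t) :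
    ∃ S : Finset ι, (S.card : ℝ) ≤ Fintype.card κ * x ∧ ∀ t, p t → ∃ a, t a ∈ S := by
  classical
  obtain ⟨T, -, ⟨hT, hTp⟩, hmax⟩ := Finite.exists_le_maximal
    (p := fun T : Finset (κ → ι) ↦ (∀ t₁ ∈ T, ∀ t₂ ∈ T, t₁ ≠ t₂ → ∀ a b, t₁ a ≠ t₂ b) ∧
      ∀ t ∈ T, p t) (a := ∅) (by simp)
  refine ⟨T.biUnion fun t ↦ univ.image t, ?_, fun t ht ↦ ?_⟩
  · have card_lt : (T.card : ℝ) < x := by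
      by_contra! hle
      exact h ⟨T, hle, hT, hTp⟩
    calc ((T.biUnion fun t ↦ univ.image t).card : ℝ) ≤ (T.card * Fintype.card κ : ℕ) := by
          exact_mod_cast card_biUnion_le_card_mul _ _ _ fun t _ ↦ card_image_le
      _ ≤ Fintype.card κ * x := by push_cast; rw [mul_comm]; gcongr
  · by_contra! hS
    simp only [mem_biUnion, mem_image, mem_univ, true_and, not_exists, not_and] at hS
    have insert_disjoint :
        ∀ t₁ ∈ insert t T, ∀ t₂ ∈ insert t T, t₁ ≠ t₂ → ∀ a b, t₁ a ≠ t₂ b := by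
      simp only [mem_insert, forall_eq_or_imp]
      exact ⟨⟨fun hne ↦ absurd rfl hne, fun u hu _ a b hab ↦ hS a u hu b hab.symm⟩,
        fun u hu ↦ ⟨fun _ a b ↦ hS b u hu a, hT u hu⟩⟩
    have ht_mem : t ∈ T := hmax ⟨insert_disjoint, by simpa using ⟨ht, hTp⟩⟩
      (subset_insert t T) (mem_insert_self t T)
    exact hS (Classical.arbitrary κ) t ht_mem _ rfl

/-- The matrix `A` with the rows and columns indexed by `S` replaced by zero. -/
def eraseIndices {ι F : Type*} [DecidableEq ι] [Zero F] (S : Finset ι) (A : Matrix ι ι F) :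
    Matrix ι ι F :=
  of fun i j ↦ if i ∈ S ∨ j ∈ S then 0 else A i j

section EraseIndices

variable {ι F : Type*} [DecidableEq ι] {S : Finset ι} {A : Matrix ι ι F}

theorem isSymm_eraseIndices [Zero F] (hA : A.IsSymm) : (eraseIndices S A).IsSymm :=
  IsSymm.ext fun i j ↦ by simp only [eraseIndices, of_apply, or_comm, hA.apply]

variable [SeminormedAddCommGroup F]

theorem norm_eraseIndices_apply_le (i j : ι) : ‖eraseIndices S A i j‖ ≤ ‖A i j‖ := by
  rw [eraseIndices, of_apply]
  split_ifs <;> simp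

theorem meanNorm_sub_eraseIndices_le [Fintype ι] [Nonempty ι] (hA : ∀ i j, ‖A i j‖ ≤ 1) :
    meanNorm (A - eraseIndices S A) ≤ 2 * (S.card / Fintype.card ι) := by
  have entry_le (i j : ι) : ‖(A - eraseIndices S A) i j‖ ≤
      (if i ∈ S then 1 else 0) + if j ∈ S then 1 else 0 := by
    by_cases hi : i ∈ S <;> by_cases hj : j ∈ S <;>
      simp [eraseIndices, hi, hj, hA i j, (hA i j).trans one_le_two, one_add_one_eq_two]
  have expect_indicator : 𝔼 i : ι, (if i ∈ S then (1 : ℝ) else 0) = S.card / Fintype.card ι := by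
    simp [Fintype.expect_eq_sum_div_card]
  calc meanNorm (A - eraseIndices S A)
      ≤ 𝔼 i, 𝔼 j, ((if i ∈ S then (1 : ℝ) else 0) + if j ∈ S then 1 else 0) :=
        expect_le_expect fun i _ ↦ expect_le_expect fun j _ ↦ entry_le i j
    _ = 2 * (S.card / Fintype.card ι) := by
        simp only [expect_add_distrib, Fintype.expect_const, expect_indicator, two_mul]

end EraseIndices

variable {F : Type*} [NormedField F] {n : ℕ} {S : Finset (Fin n)} {A : Matrix (Fin n) (Fin n) F}

theorem notMem_and_epsIndependent_of_eraseIndices {q : ℕ} {ε : ℝ} (hε : 0 ≤ ε) {t : Fin q → Fin n}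
    (ht : EpsIndependent F ε ((eraseIndices S A).submatrix t id)) :
    (∀ a, t a ∉ S) ∧ EpsIndependent F ε (A.submatrix t id) := by
  have notMem (a : Fin q) : t a ∉ S := fun ha ↦
    (ht.linearIndependent hε).ne_zero a (funext fun k ↦ by simp [eraseIndices, ha])
  set χ : Fin n → F := fun k ↦ if k ∈ S then 0 else 1 with hχ
  have hχ₁ (k : Fin n) : ‖χ k‖ ≤ 1 := by simp only [hχ]; split_ifs <;> simp
  have eraseIndices_eq_mul :
      (eraseIndices S A).submatrix t id = fun a ↦ χ * A.submatrix t id a := by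
    ext a k
    simp [eraseIndices, notMem a, hχ]
  exact ⟨notMem, .of_mul hχ₁ (eraseIndices_eq_mul ▸ ht)⟩

theorem exists_isSymm_rank_lt_of_forall_exists_mem [NeZero n] {r : ℕ} (hr : 1 ≤ r) {β : ℝ}
    (hβ : 0 < β) (hA : A.IsSymm) (hA₁ : ∀ i j, ‖A i j‖ ≤ 1)
    (hS : ∀ t : Fin r → Fin n, EpsIndependent F (β ^ (2 ^ r * r !)) (A.submatrix t id) →
      ∃ a, t a ∈ S) :
    ∃ H : Matrix (Fin n) (Fin n) F, H.IsSymm ∧ H.rank < r ∧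
      meanNorm (A - H) ≤ 2 * (S.card / n) + 28 * (r ! : ℝ) ^ 2 * β := by
  have erased_dependent (t : Fin r → Fin n) :
      ¬EpsIndependent F (β ^ (2 ^ r * r !)) ((eraseIndices S A).submatrix t id) := fun ht ↦ by
    obtain ⟨notMem, ht'⟩ := notMem_and_epsIndependent_of_eraseIndices (by positivity) ht
    obtain ⟨a, ha⟩ := hS t ht'
    exact notMem a ha
  obtain ⟨H, hH, hrank, hle⟩ := exists_isSymm_rank_lt_of_forall_not_epsIndependent hr
    (isSymm_eraseIndices hA) (fun i j ↦ (norm_eraseIndices_apply_le i j).trans (hA₁ i j)) hβ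
    erased_dependent
  refine ⟨H, hH, hrank, ?_⟩
  rw [← sub_add_sub_cancel A (eraseIndices S A) H]
  exact (meanNorm_add_le _ _).trans
    (add_le_add (by simpa using meanNorm_sub_eraseIndices_le (S := S) hA₁) hle)

end Erasing

theorem rpow_inv_two_pow_mul_factorial_le {α : ℝ} (hα : 0 < α) (hα₁ : α ≤ 1) (r : ℕ) :
    α ^ ((2 ^ r * r ! : ℝ)⁻¹) ≤ α ^ (((6 * (r : ℝ)) ^ r)⁻¹) := by
  refine Real.rpow_le_rpow_of_exponent_ge hα hα₁ (inv_anti₀ (by positivity) ?_)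
  rw [mul_pow]
  gcongr
  · norm_num
  · exact_mod_cast r.factorial_le_pow

theorem statement13_general {F : Type*} [NormedField F] {r n : ℕ} (hr : 1 ≤ r) {α δ : ℝ}
    (hα : 0 < α) {A : Matrix (Fin n) (Fin n) F} (hA : A.IsSymm) (hA₁ : ∀ i j, ‖A i j‖ ≤ 1)
    (h : ¬∃ T : Finset (Fin r → Fin n), δ * n ≤ (T.card : ℝ) ∧
      (∀ t₁ ∈ T, ∀ t₂ ∈ T, t₁ ≠ t₂ → ∀ p q, t₁ p ≠ t₂ q) ∧
      ∀ t ∈ T, EpsIndependent F α fun a ↦ A (t a)) :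
    ∃ H : Matrix (Fin n) (Fin n) F, H.IsSymm ∧ H.rank < r ∧
      ∑ i, ∑ j, ‖A i j - H i j‖ ≤
        28 * (r ! : ℝ) ^ 2 * (δ + α ^ ((2 ^ r * r ! : ℝ)⁻¹)) * (n : ℝ) ^ 2 := by
  have hδn : 0 < δ * n := by
    by_contra! hle
    exact h ⟨∅, by simpa using hle, by simp⟩
  have : NeZero n := ⟨by rintro rfl; simp at hδn⟩
  have : Nonempty (Fin r) := ⟨⟨0, hr⟩⟩
  obtain ⟨S, hScard, hS⟩ := exists_card_le_and_forall_exists_mem h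
  rw [Fintype.card_fin] at hScard
  have pow_eq : (α ^ ((2 ^ r * r ! : ℝ)⁻¹)) ^ (2 ^ r * r !) = α := by
    exact_mod_cast Real.rpow_inv_natCast_pow hα.le (n := 2 ^ r * r !) (by positivity)
  set β := α ^ ((2 ^ r * r ! : ℝ)⁻¹)
  obtain ⟨H, hH, hrank, hAH⟩ := exists_isSymm_rank_lt_of_forall_exists_mem hr
    (Real.rpow_pos_of_pos hα _) hA hA₁ (pow_eq.symm ▸ hS)
  have le_factorial_sq : (r : ℝ) ≤ 14 * (r ! : ℝ) ^ 2 := by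
    exact_mod_cast show r ≤ 14 * r ! ^ 2 by nlinarith [r.self_le_factorial]
  refine ⟨H, hH, hrank, ?_⟩
  calc ∑ i, ∑ j, ‖A i j - H i j‖ = n * n * meanNorm (A - H) := by
        simpa using sum_sum_norm_eq_card_mul_meanNorm (A - H)
    _ ≤ n * n * (2 * (14 * (r ! : ℝ) ^ 2 * (δ * n) / n) + 28 * (r ! : ℝ) ^ 2 * β) := by
        gcongr
        exact hAH.trans (by gcongr; exact hScard.trans (by gcongr))
    _ = 28 * (r ! : ℝ) ^ 2 * (δ + β) * (n : ℝ) ^ 2 := by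
        rw [← mul_assoc _ δ, mul_div_cancel_right₀ _ (NeZero.ne (n : ℝ))]
        ring

theorem statement13 : Statement13 ℂ ∧ Statement13 ℝ ∧ Statement13 ℚ := by
  have statement (F : Type) [NormedField F] : Statement13 F := fun r hr ↦
    ⟨28 * (r ! : ℝ) ^ 2, fun α δ hα hα₁ _ _ n A hA hA₁ hT ↦
      (statement13_general hr hα hA hA₁ hT).imp fun H ⟨hH, hrank, hAH⟩ ↦
        ⟨hH, hrank, hAH.trans <| by
          gcongr _ * (_ + ?_) * _
          exact rpow_inv_two_pow_mul_factorial_le hα hα₁ r⟩⟩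
  exact ⟨statement ℂ, statement ℝ, statement ℚ⟩
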